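/- Let r ≥ 1, q ≥ 2, and let m_1,…,m_q be square-free monomials forming a minimal generating set. Let i ∈ {1,…,q} and let M ∈ LCM(I^r) with M ≠ m_i^r. If there exists a ∈ G^r_i such that m^a divides M, then there exists a′ ∈ G^r_i ∩ F^r_i such that m^{a′} divides M. -/

import Mathlib

/-!
STATEMENT 10: Let r ≥ 1, q ≥ 2, and let m_1,…,m_q be square-free monomials forming a
minimal generating set. Let i ∈ [q] and M ∈ LCM(I^r) with M ≠ m_i^r. If there exists
a ∈ G^r_i with m^a ∣ M, then there exists a′ ∈ G^r_i ∩ F^r_i with m^{a′} ∣ M.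

Monomials are identified with their exponent vectors in ℕ^n; divisibility is the
componentwise order, and the lcm is the componentwise maximum. Here s = ⌈r/2⌉ = (r+1)/2.
-/

open Finset

/-- The exponent vector of `m^a = m_1^{a_1} ⋯ m_q^{a_q}`. -/
def mpow {n q : ℕ} (m : Fin q → Fin n → ℕ) (a : Fin q → ℕ) : Fin n → ℕ :=
  fun k => ∑ j, a j * m j k

/-- `LCM(I^r)`: the monomials arising as least common multiples of nonempty subsets of
`{m^a : a ∈ N^r_q}`. -/
def lcmLattice {n q : ℕ} (m : Fin q → Fin n → ℕ) (r : ℕ) : Set (Fin n → ℕ) :=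
  {M | ∃ T : Finset (Fin q → ℕ), T.Nonempty ∧ (∀ a ∈ T, ∑ j, a j = r) ∧
    M = fun k => T.sup fun a => mpow m a k}

/-- The set `F^r_i`, with `s = ⌈r/2⌉ = (r+1)/2`. -/
def Fset (r q : ℕ) (i : Fin q) : Set (Fin q → ℕ) :=
  {a | (∑ k, a k = r) ∧ a i ≤ max (r - 1) ((r + 1) / 2) ∧
    ∀ j, j ≠ i → a j ≤ (r + 1) / 2}

/-- The set `G^r_i`. -/
def Gset (r q : ℕ) (i : Fin q) : Set (Fin q → ℕ) :=
  {a | (∑ k, a k = r) ∧ r - 1 ≤ a i}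

/-!
If `a i = r - 1`, then `a` itself lies in `F^r_i`. Otherwise `a i = r`, so `m_i^r ∣ M`. Since
`M ≠ m_i^r`, some `m^b ∣ M` with `b` not concentrated at `i`, whence `m_j ∣ M` for some `j ≠ i`.
As `m_j` is square-free, `m_i^(r-1) m_j` divides `lcm(m_i^r, m_j)`, and so divides `M`.
-/

theorem exists_ne_apply_ne_zero_of_ne_single_sum {ι A : Type*} [Fintype ι] [DecidableEq ι]
    [AddCommMonoid A] {a : ι → A} {i : ι} (hne : a ≠ Pi.single i (∑ j, a j)) :
    ∃ j, j ≠ i ∧ a j ≠ 0 := by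
  contrapose! hne
  ext j
  rw [Fintype.sum_eq_single i hne]
  obtain rfl | hj := eq_or_ne j i
  · rw [Pi.single_eq_same]
  · rw [Pi.single_eq_of_ne hj, hne j hj]

theorem smul_add_le_of_add_one_smul_le {κ : Type*} {c : ℕ} {x y M : κ → ℕ} (hy : ∀ k, y k ≤ 1)
    (hxM : (c + 1) • x ≤ M) (hyM : y ≤ M) : c • x + y ≤ M := by
  intro k
  obtain hx | hx := (x k).eq_zero_or_pos
  · simpa [hx] using hyM k
  · calc c * x k + y k ≤ c * x k + x k := Nat.add_le_add_left ((hy k).trans hx) _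
      _ = (c + 1) * x k := (Nat.succ_mul c (x k)).symm
      _ ≤ M k := hxM k

section Powers

variable {n q : ℕ} (m : Fin q → Fin n → ℕ)

theorem mpow_add (a b : Fin q → ℕ) : mpow m (a + b) = mpow m a + mpow m b :=
  Matrix.add_vecMul m a b

theorem mpow_single (i : Fin q) (c : ℕ) : mpow m (Pi.single i c) = c • m i :=
  Matrix.single_vecMul m i c

theorem smul_le_mpow {a : Fin q → ℕ} {j : Fin q} {c : ℕ} (hc : c ≤ a j) :
    c • m j ≤ mpow m a := fun k =>
  calc c * m j k ≤ a j * m j k := Nat.mul_le_mul_right _ hc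
    _ ≤ mpow m a k := single_le_sum_of_canonicallyOrdered (f := fun l => a l * m l k) (mem_univ j)

end Powers

section LcmLattice

variable {n q r : ℕ} {m : Fin q → Fin n → ℕ} {i : Fin q} {M : Fin n → ℕ}

theorem exists_ne_single_mpow_le_of_mem_lcmLattice (hM : M ∈ lcmLattice m r) (hne : M ≠ r • m i) :
    ∃ b : Fin q → ℕ, ∑ j, b j = r ∧ b ≠ Pi.single i r ∧ mpow m b ≤ M := by
  obtain ⟨T, hT, hsum, rfl⟩ := hM
  obtain ⟨b, hbT, hb⟩ : ∃ b ∈ T, b ≠ Pi.single i r := by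
    contrapose! hne
    obtain rfl : T = {Pi.single i r} := eq_singleton_iff_nonempty_unique_mem.mpr ⟨hT, hne⟩
    simp only [sup_singleton, mpow_single]
  exact ⟨b, hsum b hbT, hb, fun k => le_sup (f := fun a => mpow m a k) hbT⟩

theorem exists_ne_le_of_mem_lcmLattice (hM : M ∈ lcmLattice m r) (hne : M ≠ r • m i) :
    ∃ j, j ≠ i ∧ m j ≤ M := by
  obtain ⟨b, rfl, hb, hbM⟩ := exists_ne_single_mpow_le_of_mem_lcmLattice hM hne
  obtain ⟨j, hji, hbj⟩ := exists_ne_apply_ne_zero_of_ne_single_sum hb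
  have hjb : m j ≤ mpow m b := by
    simpa only [one_smul] using smul_le_mpow m (Nat.one_le_iff_ne_zero.mpr hbj)
  exact ⟨j, hji, hjb.trans hbM⟩

end LcmLattice

theorem mem_Gset_inter_Fset_of_apply_eq_pred {q r : ℕ} {i : Fin q} {a : Fin q → ℕ}
    (hsum : ∑ k, a k = r) (hai : a i = r - 1) : a ∈ Gset r q i ∩ Fset r q i := by
  refine ⟨⟨hsum, hai.ge⟩, hsum, hai.le.trans (le_max_left _ _), fun j hj => ?_⟩
  have hij : a i + a j ≤ r :=
    hsum ▸ add_le_sum (fun _ _ => Nat.zero_le _) (mem_univ i) (mem_univ j) hj.symm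
  omega

theorem second_layer_meets_first_layer_general {n q r : ℕ} (m : Fin q → Fin n → ℕ) (i : Fin q)
    (hsf : ∀ j, j ≠ i → ∀ k, m j k ≤ 1)
    (M : Fin n → ℕ) (hM : M ∈ lcmLattice m r)
    (hne : M ≠ fun k => r * m i k)
    (hex : ∃ a ∈ Gset r q i, mpow m a ≤ M) :
    ∃ a' ∈ Gset r q i ∩ Fset r q i, mpow m a' ≤ M := by
  obtain ⟨a, ⟨hsum, hai⟩, haM⟩ := hex
  obtain hai | hai := hai.eq_or_lt
  · exact ⟨a, mem_Gset_inter_Fset_of_apply_eq_pred hsum hai.symm, haM⟩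
  · have hai_le : a i ≤ r := hsum ▸ single_le_sum_of_canonicallyOrdered (mem_univ i)
    obtain ⟨c, rfl⟩ : ∃ c, r = c + 1 := Nat.exists_eq_add_one.mpr (by omega)
    obtain ⟨j, hji, hjM⟩ := exists_ne_le_of_mem_lcmLattice hM hne
    have hiM : (c + 1) • m i ≤ M := (smul_le_mpow m hai).trans haM
    refine ⟨Pi.single i c + Pi.single j 1, mem_Gset_inter_Fset_of_apply_eq_pred ?_ ?_, ?_⟩
    · simp [sum_add_distrib]
    · simp [hji.symm]
    · rw [mpow_add, mpow_single, mpow_single, one_smul]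
      exact smul_add_le_of_add_one_smul_le (hsf j hji) hiM hjM

theorem second_layer_meets_first_layer {n q r : ℕ} (hr : 1 ≤ r) (hq : 2 ≤ q)
    (m : Fin q → Fin n → ℕ)
    (hsf : ∀ j k, m j k ≤ 1)
    (hmin : ∀ i j, i ≠ j → ¬ m i ≤ m j)
    (i : Fin q) (M : Fin n → ℕ) (hM : M ∈ lcmLattice m r)
    (hne : M ≠ fun k => r * m i k)
    (hex : ∃ a ∈ Gset r q i, mpow m a ≤ M) :
    ∃ a' ∈ Gset r q i ∩ Fset r q i, mpow m a' ≤ M := by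
  exact second_layer_meets_first_layer_general m i (fun j _ => hsf j) M hM hne hex
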